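/- (Pairing-switch vanishing) Let F : L_n → ΔK be a non-degenerate 2-filtration, and let x ∈ L_n be a grade such that F(x) − F(x−(1,1)) = {σ, τ} with two distinct simplices. Suppose that for every pair of paths p₁, p₂ passing through both x−(1,1) and x and differing only in the intermediate step, the pairing of σ and τ in the induced 1-filtrations is the same (no switch). Then Dgm F[x, ·] = 0 and Dgm F[·, x] = 0, i.e., every interval of the generalized persistence diagram with x as an endpoint has value zero. -/

import Mathlib

noncomputable section
open scoped Classical

variable {V : Type*} [DecidableEq V] [Fintype V]

/-- A finite abstract simplicial complex on vertex set `V`: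
a collection of nonempty finite sets closed under taking nonempty subsets. -/
def IsComplex (K : Finset (Finset V)) : Prop :=
  ∀ s ∈ K, s ≠ ∅ ∧ ∀ t : Finset V, t ⊆ s → t ≠ ∅ → t ∈ K

/-- The space of simplicial chains (all dimensions together) with `ZMod 2` coefficients. -/
abbrev Chn (V : Type*) := Finset V →₀ ZMod 2

/-- The simplicial boundary operator (mod 2). -/
def bdry (V : Type*) [DecidableEq V] : Chn V →ₗ[ZMod 2] Chn V :=
  Finsupp.lsum (ZMod 2) fun s =>
    LinearMap.toSpanSingleton (ZMod 2) (Chn V) (∑ v ∈ s, Finsupp.single (s.erase v) 1)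

/-- The subspace of `d`-chains supported on a complex `L`. -/
def chainsOf (d : ℕ) (L : Finset (Finset V)) : Submodule (ZMod 2) (Chn V) :=
  Submodule.span (ZMod 2)
    ((fun s => Finsupp.single s (1 : ZMod 2)) '' {s : Finset V | s ∈ L ∧ s.card = d + 1})

/-- The subspace `Z_d L` of `d`-cycles of the complex `L`. -/
def cyclesOf (d : ℕ) (L : Finset (Finset V)) : Submodule (ZMod 2) (Chn V) :=
  chainsOf d L ⊓ LinearMap.ker (bdry V)

/-- The subspace `B_d L` of `d`-boundaries of the complex `L`. -/
def boundariesOf (d : ℕ) (L : Finset (Finset V)) : Submodule (ZMod 2) (Chn V) :=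
  Submodule.map (bdry V) (chainsOf (d+1) L)

/-- The birth–death function of a 1-filtration indexed by `Fin (n+1)`:
`ZB_d F [a,b] = dim (Z_d F(a) ⊓ B_d F(b))` for `b ≠ ⊤`, and `dim Z_d F(a)` for `b = ⊤`. -/
def ZBFin (d n : ℕ) (F : Fin (n+1) → Finset (Finset V)) (a b : Fin (n+1)) : ℤ :=
  if b = Fin.last n then (Module.finrank (ZMod 2) ↥(cyclesOf d (F a)) : ℤ)
  else (Module.finrank (ZMod 2) ↥(cyclesOf d (F a) ⊓ boundariesOf d (F b)) : ℤ)

/-- The birth–death function of a 2-filtration indexed by `Fin (n+1) × Fin (n+1)`. -/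
def ZBFin2 (d n : ℕ) (F : Fin (n+1) × Fin (n+1) → Finset (Finset V))
    (a b : Fin (n+1) × Fin (n+1)) : ℤ :=
  if b = (Fin.last n, Fin.last n) then (Module.finrank (ZMod 2) ↥(cyclesOf d (F a)) : ℤ)
  else (Module.finrank (ZMod 2) ↥(cyclesOf d (F a) ⊓ boundariesOf d (F b)) : ℤ)

/-- The birth–death function of a 1-filtration `G : ℕ → complexes` with top index `M`. -/
def ZB1 (d M : ℕ) (G : ℕ → Finset (Finset V)) (a b : ℕ) : ℤ :=
  if b = M then (Module.finrank (ZMod 2) ↥(cyclesOf d (G a)) : ℤ)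
  else (Module.finrank (ZMod 2) ↥(cyclesOf d (G a) ⊓ boundariesOf d (G b)) : ℤ)

/-- A monotone staircase path of `2n` unit steps from `(0,0)` to `(n,n)` in the grid. -/
def IsPath (n : ℕ) (p : ℕ → Fin (n+1) × Fin (n+1)) : Prop :=
  p 0 = (0, 0) ∧ p (2*n) = (Fin.last n, Fin.last n) ∧
  ∀ k < 2*n, p k ≤ p (k+1) ∧
    ((p (k+1)).1 : ℕ) + ((p (k+1)).2 : ℕ) = ((p k).1 : ℕ) + ((p k).2 : ℕ) + 1

/-- The simplices added at steps `k → k+1` and `l → l+1` of the 1-filtration `G` are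
paired: the 1-dimensional persistence diagram (the Möbius inversion of the birth–death
function `ZB1`) is nonzero at the interval `[k+1, l+1]`. -/
def PairedAt (d M : ℕ) (G : ℕ → Finset (Finset V)) (k l : ℕ) : Prop :=
  ZB1 d M G (k+1) (l+1) - ZB1 d M G (k+1) l - ZB1 d M G k (l+1) + ZB1 d M G k l ≠ 0

/-- A lower corner of the appearance curve of a simplex `σ` in a 2-filtration `F`:
a minimal grade at which `σ` is present. -/
def LowerCorner {n : ℕ} (F : Fin (n+1) × Fin (n+1) → Finset (Finset V))
    (σ : Finset V) (a : Fin (n+1) × Fin (n+1)) : Prop :=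
  σ ∈ F a ∧ ∀ b : Fin (n+1) × Fin (n+1), b < a → σ ∉ F b

/-- A 2-filtration is non-degenerate if no two (distinct) lower corners of appearance
curves share a component of a grade. -/
def NonDeg {n : ℕ} (F : Fin (n+1) × Fin (n+1) → Finset (Finset V)) : Prop :=
  ∀ (σ τ : Finset V) (a b : Fin (n+1) × Fin (n+1)),
    LowerCorner F σ a → LowerCorner F τ b → (σ ≠ τ ∨ a ≠ b) →
    a.1 ≠ b.1 ∧ a.2 ≠ b.2

/-- The index of the step (of the two steps `k → k+1 → k+2` around a unit square) of the
path `p` at which the simplex `σ` is added to the filtration. -/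
def stepOf {n : ℕ} (F : Fin (n+1) × Fin (n+1) → Finset (Finset V))
    (p : ℕ → Fin (n+1) × Fin (n+1)) (σ : Finset V) (k : ℕ) : ℕ :=
  if σ ∈ F (p (k+1)) then k else k + 1

set_option linter.unusedSectionVars false

theorem chainsOf_eq_supported (d : ℕ) (L : Finset (Finset V)) :
    chainsOf d L = Finsupp.supported (ZMod 2) (ZMod 2) {s : Finset V | s ∈ L ∧ s.card = d + 1} :=
  (Finsupp.supported_eq_span_single _ _).symm

theorem chainsOf_mono (d : ℕ) {K L : Finset (Finset V)} (h : K ⊆ L) :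
    chainsOf d K ≤ chainsOf d L := by
  rw [chainsOf_eq_supported, chainsOf_eq_supported]
  exact Finsupp.supported_mono fun s hs => ⟨h hs.1, hs.2⟩

theorem chainsOf_inf_le (d : ℕ) {K L M : Finset (Finset V)} (h : K ∩ L ⊆ M) :
    chainsOf d K ⊓ chainsOf d L ≤ chainsOf d M := by
  simp only [chainsOf_eq_supported, ← Finsupp.supported_inter]
  exact Finsupp.supported_mono fun s hs => ⟨h (Finset.mem_inter.2 ⟨hs.1.1, hs.2.1⟩), hs.1.2⟩

theorem chainsOf_insert_of_card_ne (d : ℕ) {K L : Finset (Finset V)} {s : Finset V}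
    (h : L ⊆ insert s K) (hs : s.card ≠ d + 1) : chainsOf d L ≤ chainsOf d K := by
  simp only [chainsOf_eq_supported]
  refine Finsupp.supported_mono fun t ht => ⟨?_, ht.2⟩
  rcases Finset.mem_insert.1 (h ht.1) with rfl | h'
  · exact absurd ht.2 hs
  · exact h'

theorem cyclesOf_mono (d : ℕ) {K L : Finset (Finset V)} (h : K ⊆ L) :
    cyclesOf d K ≤ cyclesOf d L :=
  inf_le_inf_right _ (chainsOf_mono d h)

theorem boundariesOf_mono (d : ℕ) {K L : Finset (Finset V)} (h : K ⊆ L) :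
    boundariesOf d K ≤ boundariesOf d L :=
  Submodule.map_mono (chainsOf_mono _ h)

theorem boundariesOf_le_chainsOf (d : ℕ) {L : Finset (Finset V)} (hL : IsComplex L) :
    boundariesOf d L ≤ chainsOf d L := by
  rw [boundariesOf, chainsOf, Submodule.map_span_le]
  rintro _ ⟨s, ⟨hs, hc⟩, rfl⟩
  simp only [bdry, Finsupp.lsum_single, LinearMap.toSpanSingleton_apply, one_smul]
  refine Submodule.sum_mem _ fun v hv => Submodule.subset_span ⟨s.erase v, ⟨?_, ?_⟩, rfl⟩
  · refine (hL s hs).2 _ (Finset.erase_subset _ _) fun h => ?_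
    have := Finset.card_erase_of_mem hv
    rw [h, Finset.card_empty] at this
    omega
  · rw [Finset.card_erase_of_mem hv, hc]
    omega

/-- A new simplex cannot occur in a boundary of the complex it has just been added to. -/
theorem boundariesOf_le_chainsOf_of_subset_insert (d : ℕ) {K L : Finset (Finset V)}
    {s : Finset V} (hK : IsComplex K) (hL : IsComplex L) (h : L ⊆ insert s K) :
    boundariesOf d L ≤ chainsOf d K := by
  by_cases hs : s.card = d + 1
  · exact (Submodule.map_mono (chainsOf_insert_of_card_ne (d + 1) h (by omega))).trans
      (boundariesOf_le_chainsOf d hK)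
  · exact (boundariesOf_le_chainsOf d hL).trans (chainsOf_insert_of_card_ne d h hs)

theorem finrank_cyclesOf_inf_le_add_one (d : ℕ) {K L : Finset (Finset V)} {s : Finset V}
    (h : L ⊆ insert s K) (S : Submodule (ZMod 2) (Chn V)) :
    Module.finrank (ZMod 2) ↥(cyclesOf d L ⊓ S) ≤
      Module.finrank (ZMod 2) ↥(cyclesOf d K ⊓ S) + 1 := by
  set A := cyclesOf d L ⊓ S
  set f : ↥A →ₗ[ZMod 2] ZMod 2 := (Finsupp.lapply s).comp A.subtype
  have hker : (LinearMap.ker f).map A.subtype ≤ cyclesOf d K ⊓ S := by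
    rintro _ ⟨⟨c, ⟨hc, hcb⟩, hcS⟩, hcs, rfl⟩
    refine ⟨⟨?_, hcb⟩, hcS⟩
    have hc' : c ∈ chainsOf d L := hc
    change c ∈ chainsOf d K
    rw [chainsOf_eq_supported, Finsupp.mem_supported'] at hc' ⊢
    intro t ht
    by_cases hts : t = s
    · subst hts
      exact hcs
    · refine hc' t fun ht' => ht ⟨?_, ht'.2⟩
      exact (Finset.mem_insert.1 (h ht'.1)).resolve_left hts
  have h1 := LinearMap.finrank_range_add_finrank_ker f
  have h2 : Module.finrank (ZMod 2) (LinearMap.range f) ≤ 1 := by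
    simpa using Submodule.finrank_le (LinearMap.range f)
  have h3 := Submodule.finrank_mono hker
  rw [Submodule.finrank_map_subtype_eq] at h3
  omega

/-- The pairing number of two elementary steps of a filtration is `0` or `1`. -/
theorem pairing_eq_zero_or_one (d : ℕ) {K L : Finset (Finset V)} {s : Finset V} (hKL : K ⊆ L)
    (h : L ⊆ insert s K) {S T : Submodule (ZMod 2) (Chn V)} (hST : S ≤ T) :
    (Module.finrank (ZMod 2) ↥(cyclesOf d L ⊓ T) : ℤ) -
        Module.finrank (ZMod 2) ↥(cyclesOf d L ⊓ S) -
        Module.finrank (ZMod 2) ↥(cyclesOf d K ⊓ T) +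
        Module.finrank (ZMod 2) ↥(cyclesOf d K ⊓ S) = 0 ∨
      (Module.finrank (ZMod 2) ↥(cyclesOf d L ⊓ T) : ℤ) -
        Module.finrank (ZMod 2) ↥(cyclesOf d L ⊓ S) -
        Module.finrank (ZMod 2) ↥(cyclesOf d K ⊓ T) +
        Module.finrank (ZMod 2) ↥(cyclesOf d K ⊓ S) = 1 := by
  have hc := cyclesOf_mono d hKL
  have h1 := finrank_cyclesOf_inf_le_add_one d h T
  have h2 : Module.finrank (ZMod 2) ↥(cyclesOf d K ⊓ S) ≤
      Module.finrank (ZMod 2) ↥(cyclesOf d L ⊓ S) :=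
    Submodule.finrank_mono (inf_le_inf_right _ hc)
  have h3 := Submodule.finrank_sup_add_finrank_inf_eq (cyclesOf d L ⊓ S) (cyclesOf d K ⊓ T)
  have h4 : (cyclesOf d L ⊓ S) ⊓ (cyclesOf d K ⊓ T) = cyclesOf d K ⊓ S := by
    rw [inf_inf_inf_comm, inf_eq_right.2 hc, inf_eq_left.2 hST]
  have h5 : Module.finrank (ZMod 2) ↥((cyclesOf d L ⊓ S) ⊔ (cyclesOf d K ⊓ T)) ≤
      Module.finrank (ZMod 2) ↥(cyclesOf d L ⊓ T) :=
    Submodule.finrank_mono (sup_le (inf_le_inf_left _ hST) (inf_le_inf_right _ hc))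
  rw [h4] at h3
  omega

/-- The rank of a grade: its distance from the bottom of the grid. -/
def gridRank {n : ℕ} (a : Fin (n+1) × Fin (n+1)) : ℕ := (a.1 : ℕ) + (a.2 : ℕ)

theorem grid_le_iff {n : ℕ} {a b : Fin (n+1) × Fin (n+1)} :
    a ≤ b ↔ (a.1 : ℕ) ≤ b.1 ∧ (a.2 : ℕ) ≤ b.2 := Iff.rfl

theorem grid_ext_iff {n : ℕ} {a b : Fin (n+1) × Fin (n+1)} :
    a = b ↔ (a.1 : ℕ) = b.1 ∧ (a.2 : ℕ) = b.2 := by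
  rw [Prod.ext_iff, Fin.ext_iff, Fin.ext_iff]

theorem gridRank_eq_iff {n : ℕ} {a : Fin (n+1) × Fin (n+1)} :
    gridRank a = 2 * n ↔ a = (Fin.last n, Fin.last n) := by
  have h1 := a.1.is_lt
  have h2 := a.2.is_lt
  simp only [gridRank, grid_ext_iff, Fin.val_last]
  omega

/-- A covering step from `c` that stays below all elements of a chain lying above `c`. -/
theorem exists_step_of_chain {n : ℕ} {S : Set (Fin (n+1) × Fin (n+1))}
    (hS : ∀ e ∈ S, ∀ f ∈ S, e ≤ f ∨ f ≤ e) (htop : (Fin.last n, Fin.last n) ∈ S)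
    {c : Fin (n+1) × Fin (n+1)} (hc : c ≠ (Fin.last n, Fin.last n)) :
    ∃ c', c ≤ c' ∧ gridRank c' = gridRank c + 1 ∧ ∀ e ∈ S, c ≤ e → e ≠ c → c' ≤ e := by
  have hlt1 := c.1.is_lt
  have hlt2 := c.2.is_lt
  by_cases h : ∀ e ∈ S, c ≤ e → e ≠ c → (c.1 : ℕ) < e.1
  · have h1 := h _ htop (by simp only [grid_le_iff, Fin.val_last]; omega) hc.symm
    simp only [Fin.val_last] at h1
    refine ⟨(⟨c.1 + 1, by omega⟩, c.2), ?_, ?_, fun e he hce hne => ?_⟩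
    · simp only [grid_le_iff]; omega
    · simp only [gridRank]; omega
    · have := h e he hce hne
      simp only [grid_le_iff] at hce ⊢
      omega
  · push Not at h
    obtain ⟨e, he, hce, hne, h1⟩ := h
    have he2 := e.2.is_lt
    simp only [grid_le_iff, Ne, grid_ext_iff] at hce hne
    refine ⟨(c.1, ⟨c.2 + 1, by omega⟩), ?_, ?_, fun f hf hcf hnf => ?_⟩
    · simp only [grid_le_iff]; omega
    · simp only [gridRank]; omega
    · have := hS e he f hf
      simp only [grid_le_iff, Ne, grid_ext_iff] at hcf hnf this ⊢
      omega

theorem exists_path_from {n : ℕ} {S : Set (Fin (n+1) × Fin (n+1))}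
    (hS : ∀ e ∈ S, ∀ f ∈ S, e ≤ f ∨ f ≤ e) (htop : (Fin.last n, Fin.last n) ∈ S) (N : ℕ) :
    ∀ c : Fin (n+1) × Fin (n+1), gridRank c + N = 2 * n →
      ∃ p : ℕ → Fin (n+1) × Fin (n+1), p (gridRank c) = c ∧
        (∀ k, gridRank c ≤ k → k < 2 * n →
          p k ≤ p (k+1) ∧ gridRank (p (k+1)) = gridRank (p k) + 1) ∧
        ∀ e ∈ S, c ≤ e → p (gridRank e) = e := by
  induction N with
  | zero =>
    intro c hc
    obtain rfl := gridRank_eq_iff.1 hc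
    refine ⟨fun _ => (Fin.last n, Fin.last n), rfl, fun k h1 h2 => by omega, fun e _ hce => ?_⟩
    have h1 := e.1.is_lt
    have h2 := e.2.is_lt
    simp only [grid_le_iff, grid_ext_iff, Fin.val_last] at hce ⊢
    omega
  | succ N ih =>
    intro c hc
    have hne : c ≠ (Fin.last n, Fin.last n) := fun h => by
      have := gridRank_eq_iff.2 h
      omega
    obtain ⟨c', hcc', hr, hc'⟩ := exists_step_of_chain hS htop hne
    obtain ⟨q, hq, hstep, hqS⟩ := ih c' (by omega)
    refine ⟨fun k => if k ≤ gridRank c then c else q k, if_pos le_rfl, fun k h1 h2 => ?_,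
      fun e he hce => ?_⟩
    · rcases h1.eq_or_lt with rfl | h1
      · simp only [le_refl, if_true, if_neg (Nat.not_succ_le_self (gridRank c))]
        rw [← hr, hq]
        exact ⟨hcc', rfl⟩
      · simp only [not_le.2 h1, if_false, not_le.2 (h1.trans (Nat.lt_succ_self k))]
        exact hstep k (by omega) h2
    · by_cases hec : e = c
      · subst hec
        exact if_pos le_rfl
      · have h1 := hc' e he hce hec
        have h2 : gridRank c' ≤ gridRank e := Nat.add_le_add h1.1 h1.2
        simp only [not_le.2 (show gridRank c < gridRank e by omega), if_false]
        exact hqS e he h1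

/-- Every chain of the grid lies on a monotone staircase path. -/
theorem exists_isPath_through {n : ℕ} {S : Set (Fin (n+1) × Fin (n+1))}
    (hS : ∀ e ∈ S, ∀ f ∈ S, e ≤ f ∨ f ≤ e) :
    ∃ p, IsPath n p ∧ ∀ e ∈ S, p (gridRank e) = e := by
  have hle : ∀ e : Fin (n+1) × Fin (n+1), e ≤ (Fin.last n, Fin.last n) := fun e =>
    ⟨Fin.le_last _, Fin.le_last _⟩
  have hins : ∀ e ∈ insert (Fin.last n, Fin.last n) S, ∀ f ∈ insert (Fin.last n, Fin.last n) S,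
      e ≤ f ∨ f ≤ e := by
    rintro e (rfl | he) f (rfl | hf)
    · exact Or.inl le_rfl
    · exact Or.inr (hle f)
    · exact Or.inl (hle e)
    · exact hS e he f hf
  obtain ⟨p, h0, hstep, hp⟩ := exists_path_from hins (Set.mem_insert _ _) (2 * n) (0, 0)
    (by simp [gridRank])
  have h00 : ∀ e : Fin (n+1) × Fin (n+1), (0, 0) ≤ e := fun e => ⟨Fin.zero_le _, Fin.zero_le _⟩
  refine ⟨p, ⟨by simpa [gridRank] using h0, ?_, fun k hk => hstep k (by simp [gridRank]) hk⟩,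
    fun e he => hp e (Set.mem_insert_of_mem _ he) (h00 e)⟩
  have := hp _ (Set.mem_insert _ _) (h00 _)
  rwa [gridRank_eq_iff.2 rfl] at this

theorem IsPath.gridRank_apply {n : ℕ} {p : ℕ → Fin (n+1) × Fin (n+1)} (hp : IsPath n p) {k : ℕ}
    (hk : k ≤ 2 * n) : gridRank (p k) = k := by
  induction k with
  | zero => rw [hp.1]; rfl
  | succ k ih =>
    have h := (hp.2.2 k hk).2
    have h' := ih (by omega)
    simp only [gridRank] at h' ⊢
    omega

theorem IsPath.apply_eq_last_iff {n : ℕ} {p : ℕ → Fin (n+1) × Fin (n+1)} (hp : IsPath n p)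
    {k : ℕ} (hk : k ≤ 2 * n) : p k = (Fin.last n, Fin.last n) ↔ k = 2 * n := by
  rw [← gridRank_eq_iff, hp.gridRank_apply hk]

theorem IsPath.monotoneOn {n : ℕ} {p : ℕ → Fin (n+1) × Fin (n+1)} (hp : IsPath n p) {k l : ℕ}
    (hkl : k ≤ l) (hl : l ≤ 2 * n) : p k ≤ p l := by
  induction l, hkl using Nat.le_induction with
  | base => exact le_rfl
  | succ l _ ih => exact (ih (by omega)).trans (hp.2.2 l hl).1

/-- Replacing the vertex between `p k` and `p (k + 2)` by another intermediate grade. -/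
theorem IsPath.update {n : ℕ} {p : ℕ → Fin (n+1) × Fin (n+1)} (hp : IsPath n p) {k : ℕ}
    (hk : k + 2 ≤ 2 * n) {z : Fin (n+1) × Fin (n+1)} (h1 : p k ≤ z) (h2 : z ≤ p (k + 2))
    (hz : gridRank z = k + 1) : IsPath n (Function.update p (k + 1) z) := by
  refine ⟨?_, ?_, fun m hm => ?_⟩
  · rw [Function.update_of_ne (by omega), hp.1]
  · by_cases h : 2 * n = k + 1
    · omega
    · rw [Function.update_of_ne h, hp.2.1]
  · change _ ∧ gridRank _ = gridRank _ + 1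
    rcases eq_or_ne m k with rfl | hmk
    · rw [Function.update_self, Function.update_of_ne (by omega), hp.gridRank_apply hm.le]
      exact ⟨h1, hz⟩
    · rcases eq_or_ne m (k + 1) with rfl | hmk'
      · rw [Function.update_self, Function.update_of_ne (by omega),
          show k + 1 + 1 = k + 2 from rfl, hp.gridRank_apply hk, hz]
        exact ⟨h2, rfl⟩
      · rw [Function.update_of_ne hmk', Function.update_of_ne (by omega)]
        exact hp.2.2 m hm

section NonDegenerate

variable {n : ℕ} {F : Fin (n+1) × Fin (n+1) → Finset (Finset V)}

theorem exists_lowerCorner_le {s : Finset V} {v : Fin (n+1) × Fin (n+1)} (h : s ∈ F v) :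
    ∃ a ≤ v, LowerCorner F s a := by
  obtain ⟨a, hav, ha⟩ := (Set.toFinite {a | s ∈ F a}).exists_le_minimal h
  exact ⟨a, hav, ha.1, fun b hb hsb => hb.not_ge (ha.2 hsb hb.le)⟩

theorem NonDeg.eq_of_horizontal (hnd : NonDeg F) (hmono : Monotone F) {s t : Finset V}
    {u v u' v' : Fin (n+1) × Fin (n+1)} (h1 : (u.1 : ℕ) + 1 = v.1) (h2 : (u.2 : ℕ) = v.2)
    (h1' : (u'.1 : ℕ) + 1 = v'.1) (h2' : (u'.2 : ℕ) = v'.2) (hv : (v.1 : ℕ) = v'.1)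
    (hs : s ∈ F v) (hs' : s ∉ F u) (ht : t ∈ F v') (ht' : t ∉ F u') : s = t := by
  obtain ⟨a, ha, hac⟩ := exists_lowerCorner_le hs
  obtain ⟨b, hb, hbc⟩ := exists_lowerCorner_le ht
  have hau : ¬ a ≤ u := fun h => hs' (hmono h hac.1)
  have hbu : ¬ b ≤ u' := fun h => ht' (hmono h hbc.1)
  by_contra hst
  refine (hnd s t a b hac hbc (Or.inl hst)).1 (Fin.ext ?_)
  simp only [grid_le_iff] at *
  omega

theorem NonDeg.eq_of_vertical (hnd : NonDeg F) (hmono : Monotone F) {s t : Finset V}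
    {u v u' v' : Fin (n+1) × Fin (n+1)} (h1 : (u.2 : ℕ) + 1 = v.2) (h2 : (u.1 : ℕ) = v.1)
    (h1' : (u'.2 : ℕ) + 1 = v'.2) (h2' : (u'.1 : ℕ) = v'.1) (hv : (v.2 : ℕ) = v'.2)
    (hs : s ∈ F v) (hs' : s ∉ F u) (ht : t ∈ F v') (ht' : t ∉ F u') : s = t := by
  obtain ⟨a, ha, hac⟩ := exists_lowerCorner_le hs
  obtain ⟨b, hb, hbc⟩ := exists_lowerCorner_le ht
  have hau : ¬ a ≤ u := fun h => hs' (hmono h hac.1)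
  have hbu : ¬ b ≤ u' := fun h => ht' (hmono h hbc.1)
  by_contra hst
  refine (hnd s t a b hac hbc (Or.inl hst)).2 (Fin.ext ?_)
  simp only [grid_le_iff] at *
  omega

/-- A unit step of a non-degenerate 2-filtration adds at most one simplex. -/
theorem NonDeg.exists_subset_insert (hnd : NonDeg F) (hmono : Monotone F)
    {u v : Fin (n+1) × Fin (n+1)} (huv : u ≤ v) (hr : gridRank v = gridRank u + 1) :
    ∃ s, F v ⊆ insert s (F u) := by
  by_cases h : F v ⊆ F u
  · exact ⟨∅, h.trans (Finset.subset_insert _ _)⟩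
  · obtain ⟨s, hs, hs'⟩ := Finset.not_subset.1 h
    refine ⟨s, fun t ht => Finset.mem_insert.2 (or_iff_not_imp_right.2 fun ht' => ?_)⟩
    simp only [gridRank, grid_le_iff] at hr huv
    rcases (show (u.1 : ℕ) + 1 = v.1 ∧ (u.2 : ℕ) = v.2 ∨ (u.2 : ℕ) + 1 = v.2 ∧ (u.1 : ℕ) = v.1 by
      omega) with ⟨h1, h2⟩ | ⟨h1, h2⟩
    · exact hnd.eq_of_horizontal hmono h1 h2 h1 h2 rfl ht ht' hs hs'
    · exact hnd.eq_of_vertical hmono h1 h2 h1 h2 rfl ht ht' hs hs'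

end NonDegenerate

/-- The chains that count as dead at the grade `e`; at the top of the grid, all of them do. -/
def deadChains (d n : ℕ) (F : Fin (n+1) × Fin (n+1) → Finset (Finset V))
    (e : Fin (n+1) × Fin (n+1)) : Submodule (ZMod 2) (Chn V) :=
  if e = (Fin.last n, Fin.last n) then ⊤ else boundariesOf d (F e)

/-- The pairing number of a step `u → v` with a step `e → f`. -/
def pairingNumber (d n : ℕ) (F : Fin (n+1) × Fin (n+1) → Finset (Finset V))
    (u v e f : Fin (n+1) × Fin (n+1)) : ℤ :=
  ZBFin2 d n F v f - ZBFin2 d n F v e - ZBFin2 d n F u f + ZBFin2 d n F u e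

section BirthDeath

variable {d n : ℕ} {F : Fin (n+1) × Fin (n+1) → Finset (Finset V)}

theorem ZBFin2_eq_finrank (a b : Fin (n+1) × Fin (n+1)) :
    ZBFin2 d n F a b = Module.finrank (ZMod 2) ↥(cyclesOf d (F a) ⊓ deadChains d n F b) := by
  by_cases h : b = (Fin.last n, Fin.last n)
  · rw [ZBFin2, deadChains, if_pos h, if_pos h, inf_top_eq]
  · rw [ZBFin2, deadChains, if_neg h, if_neg h]

theorem deadChains_mono (hmono : Monotone F) {e f : Fin (n+1) × Fin (n+1)} (h : e ≤ f) :
    deadChains d n F e ≤ deadChains d n F f := by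
  unfold deadChains
  split_ifs with h1 h2 h2
  · exact le_rfl
  · subst h1
    exact absurd (le_antisymm (show f ≤ _ from ⟨Fin.le_last _, Fin.le_last _⟩) h) h2
  · exact le_top
  · exact boundariesOf_mono d (hmono h)

theorem ZBFin2_bot (hbot : F (0, 0) = ∅) (e : Fin (n+1) × Fin (n+1)) :
    ZBFin2 d n F (0, 0) e = 0 := by
  have h : cyclesOf d (F (0, 0)) = ⊥ := by
    rw [hbot, cyclesOf, chainsOf]
    simp
  rw [ZBFin2_eq_finrank, h, bot_inf_eq, finrank_bot, Nat.cast_zero]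

theorem ZBFin2_congr {u v e : Fin (n+1) × Fin (n+1)} (huv : F u ⊆ F v)
    (h : cyclesOf d (F v) ⊓ deadChains d n F e ≤ chainsOf d (F u)) :
    ZBFin2 d n F v e = ZBFin2 d n F u e := by
  have heq : cyclesOf d (F v) ⊓ deadChains d n F e = cyclesOf d (F u) ⊓ deadChains d n F e :=
    le_antisymm (le_inf (le_inf h (inf_le_left.trans inf_le_right)) inf_le_right)
      (inf_le_inf_right _ (cyclesOf_mono d huv))
  rw [ZBFin2_eq_finrank, ZBFin2_eq_finrank, heq]

theorem ZBFin2_eq_of_le (hmono : Monotone F) (hcx : ∀ x, IsComplex (F x))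
    {e v : Fin (n+1) × Fin (n+1)} (he : e ≠ (Fin.last n, Fin.last n)) (h : e ≤ v) :
    ZBFin2 d n F v e = ZBFin2 d n F e e := by
  refine ZBFin2_congr (hmono h) (inf_le_right.trans ?_)
  rw [deadChains, if_neg he]
  exact boundariesOf_le_chainsOf d (hcx e)

theorem ZBFin2_self_eq (hmono : Monotone F) (hcx : ∀ x, IsComplex (F x))
    {u v : Fin (n+1) × Fin (n+1)} (hv : v ≠ (Fin.last n, Fin.last n)) (huv : u ≤ v)
    {s : Finset V} (hs : F v ⊆ insert s (F u)) : ZBFin2 d n F v v = ZBFin2 d n F u v := by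
  refine ZBFin2_congr (hmono huv) (inf_le_right.trans ?_)
  rw [deadChains, if_neg hv]
  exact boundariesOf_le_chainsOf_of_subset_insert d (hcx u) (hcx v) hs

theorem ZBFin2_eq_of_inter_subset (hmono : Monotone F) {a b u v e : Fin (n+1) × Fin (n+1)}
    (hab : a ≤ b) (huv : u ≤ v) (hvb : v ≤ b) (h : ZBFin2 d n F b e = ZBFin2 d n F a e)
    (hF : F v ∩ F a ⊆ F u) : ZBFin2 d n F v e = ZBFin2 d n F u e := by
  refine ZBFin2_congr (hmono huv) (le_trans (le_inf (inf_le_left.trans inf_le_left) ?_)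
    (chainsOf_inf_le d hF))
  rw [ZBFin2_eq_finrank, ZBFin2_eq_finrank, Nat.cast_inj] at h
  have := Submodule.eq_of_le_of_finrank_eq
    (inf_le_inf_right (deadChains d n F e) (cyclesOf_mono d (hmono hab))) h.symm
  exact (inf_le_inf_right _ (cyclesOf_mono d (hmono hvb))).trans
    (this.ge.trans (inf_le_left.trans inf_le_left))

theorem pairingNumber_eq_zero_or_one (hmono : Monotone F) (hnd : NonDeg F)
    {u v e f : Fin (n+1) × Fin (n+1)} (huv : u ≤ v) (hr : gridRank v = gridRank u + 1)
    (hef : e ≤ f) : pairingNumber d n F u v e f = 0 ∨ pairingNumber d n F u v e f = 1 := by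
  obtain ⟨s, hs⟩ := hnd.exists_subset_insert hmono huv hr
  simp only [pairingNumber, ZBFin2_eq_finrank]
  exact pairing_eq_zero_or_one d (hmono huv) hs (deadChains_mono hmono hef)

theorem ZB1_comp_path {p : ℕ → Fin (n+1) × Fin (n+1)} (hp : IsPath n p) (i : ℕ) {j : ℕ}
    (hj : j ≤ 2 * n) : ZB1 d (2 * n) (F ∘ p) i j = ZBFin2 d n F (p i) (p j) := by
  simp only [ZB1, ZBFin2, hp.apply_eq_last_iff hj, Function.comp_apply]

theorem pairedAt_comp_path_iff {p : ℕ → Fin (n+1) × Fin (n+1)} (hp : IsPath n p) (k : ℕ) {l : ℕ}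
    (hl : l < 2 * n) : PairedAt d (2 * n) (F ∘ p) k l ↔
      pairingNumber d n F (p k) (p (k + 1)) (p l) (p (l + 1)) ≠ 0 := by
  rw [PairedAt, pairingNumber, ZB1_comp_path hp _ hl, ZB1_comp_path hp _ hl.le,
    ZB1_comp_path hp _ hl, ZB1_comp_path hp _ hl.le]

theorem pairingNumber_eq_of_pairedAt_iff (hmono : Monotone F) (hnd : NonDeg F)
    {p q : ℕ → Fin (n+1) × Fin (n+1)} (hp : IsPath n p) (hq : IsPath n q) {k l k' l' : ℕ}
    (hk : k < 2 * n) (hl : l < 2 * n) (hk' : k' < 2 * n) (hl' : l' < 2 * n)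
    (h : PairedAt d (2 * n) (F ∘ p) k l ↔ PairedAt d (2 * n) (F ∘ q) k' l') :
    pairingNumber d n F (p k) (p (k + 1)) (p l) (p (l + 1)) =
      pairingNumber d n F (q k') (q (k' + 1)) (q l') (q (l' + 1)) := by
  rw [pairedAt_comp_path_iff hp k hl, pairedAt_comp_path_iff hq k' hl'] at h
  have h1 := pairingNumber_eq_zero_or_one (d := d) hmono hnd (hp.2.2 k hk).1 (hp.2.2 k hk).2
    (hp.2.2 l hl).1
  have h2 := pairingNumber_eq_zero_or_one (d := d) hmono hnd (hq.2.2 k' hk').1 (hq.2.2 k' hk').2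
    (hq.2.2 l' hl').1
  rcases h1 with h1 | h1 <;> rcases h2 with h2 | h2 <;> simp_all

end BirthDeath

section Square

variable {d n : ℕ} {F : Fin (n+1) × Fin (n+1) → Finset (Finset V)}
  {a b c x : Fin (n+1) × Fin (n+1)}

/-- The step `a → b` of a path through `b` and the step `c → x` of the path obtained by
replacing `b` with `c` have the same pairings. -/
def SamePairing (d n : ℕ) (F : Fin (n+1) × Fin (n+1) → Finset (Finset V))
    (a b c x : Fin (n+1) × Fin (n+1)) : Prop :=
  ∀ p k, IsPath n p → k + 2 ≤ 2 * n → p k = a → p (k + 2) = x → ∀ m,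
    (PairedAt d (2 * n) (F ∘ Function.update p (k + 1) b) k m ↔
      PairedAt d (2 * n) (F ∘ Function.update p (k + 1) c) (k + 1) m) ∧
    (PairedAt d (2 * n) (F ∘ Function.update p (k + 1) b) m k ↔
      PairedAt d (2 * n) (F ∘ Function.update p (k + 1) c) m (k + 1))

/-- The grades `a`, `b`, `c`, `x` are the vertices of a unit square with bottom `a` and
top `x`. -/
structure IsUnitSquare (a b c x : Fin (n+1) × Fin (n+1)) : Prop where
  bot_le_left : a ≤ b
  bot_le_right : a ≤ c
  left_le_top : b ≤ x
  right_le_top : c ≤ x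
  rank_left : gridRank b = gridRank a + 1
  rank_right : gridRank c = gridRank a + 1
  rank_top : gridRank x = gridRank a + 2

theorem gridRank_le {n : ℕ} (e : Fin (n+1) × Fin (n+1)) : gridRank e ≤ 2 * n := by
  have h1 := e.1.is_lt
  have h2 := e.2.is_lt
  simp only [gridRank]
  omega

theorem SamePairing.pairingNumber_eq (h : SamePairing d n F a b c x) (hmono : Monotone F)
    (hnd : NonDeg F) (hsq : IsUnitSquare a b c x) {p : ℕ → Fin (n+1) × Fin (n+1)}
    (hp : IsPath n p) (hpa : p (gridRank a) = a) (hpx : p (gridRank a + 2) = x) {m : ℕ}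
    (hm : m < 2 * n) :
    pairingNumber d n F a b (Function.update p (gridRank a + 1) b m)
        (Function.update p (gridRank a + 1) b (m + 1)) =
      pairingNumber d n F c x (Function.update p (gridRank a + 1) c m)
        (Function.update p (gridRank a + 1) c (m + 1)) ∧
    pairingNumber d n F (Function.update p (gridRank a + 1) b m)
        (Function.update p (gridRank a + 1) b (m + 1)) a b =
      pairingNumber d n F (Function.update p (gridRank a + 1) c m)
        (Function.update p (gridRank a + 1) c (m + 1)) c x := by
  have hk : gridRank a + 2 ≤ 2 * n := hsq.rank_top ▸ gridRank_le x
  have hb : IsPath n (Function.update p (gridRank a + 1) b) :=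
    hp.update hk (hpa.le.trans hsq.bot_le_left) (hsq.left_le_top.trans hpx.ge) hsq.rank_left
  have hc : IsPath n (Function.update p (gridRank a + 1) c) :=
    hp.update hk (hpa.le.trans hsq.bot_le_right) (hsq.right_le_top.trans hpx.ge) hsq.rank_right
  have e1 : Function.update p (gridRank a + 1) b (gridRank a) = a := by
    rw [Function.update_of_ne (by omega), hpa]
  have e2 : Function.update p (gridRank a + 1) c (gridRank a + 1 + 1) = x := by
    rw [Function.update_of_ne (by omega), hpx]
  obtain ⟨h1, h2⟩ := h p _ hp hk hpa hpx m
  have h1' := pairingNumber_eq_of_pairedAt_iff hmono hnd hb hc (by omega) hm (by omega) hm h1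
  have h2' := pairingNumber_eq_of_pairedAt_iff hmono hnd hb hc hm (by omega) hm (by omega) h2
  rw [e1, e2, Function.update_self, Function.update_self] at h1' h2'
  exact ⟨h1', h2'⟩

theorem IsUnitSquare.bot_le_top (hsq : IsUnitSquare a b c x) : a ≤ x :=
  hsq.bot_le_left.trans hsq.left_le_top

theorem IsUnitSquare.left_ne_last (hsq : IsUnitSquare a b c x) :
    b ≠ (Fin.last n, Fin.last n) := fun h => by
  have h1 := gridRank_eq_iff.2 h
  have h2 := gridRank_le x
  have h3 := hsq.rank_left
  have h4 := hsq.rank_top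
  omega

theorem IsUnitSquare.symm (hsq : IsUnitSquare a b c x) : IsUnitSquare a c b x :=
  ⟨hsq.2, hsq.1, hsq.4, hsq.3, hsq.6, hsq.5, hsq.7⟩

theorem IsUnitSquare.bot_ne_last (hsq : IsUnitSquare a b c x) :
    a ≠ (Fin.last n, Fin.last n) := fun h => by
  have h1 := gridRank_eq_iff.2 h
  have h2 := gridRank_le x
  have h4 := hsq.rank_top
  omega

theorem IsUnitSquare.ZBFin2_left_left (hsq : IsUnitSquare a b c x) (hmono : Monotone F)
    (hcx : ∀ x, IsComplex (F x)) (hnd : NonDeg F) : ZBFin2 d n F b b = ZBFin2 d n F a b := by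
  obtain ⟨s, hs⟩ := hnd.exists_subset_insert hmono hsq.bot_le_left hsq.rank_left
  exact ZBFin2_self_eq hmono hcx hsq.left_ne_last hsq.bot_le_left hs

/-- Neither of the two simplices of the square is paired with the other one or with itself. -/
theorem SamePairing.ZBFin2_top (h : SamePairing d n F a b c x) (hmono : Monotone F)
    (hcx : ∀ x, IsComplex (F x)) (hnd : NonDeg F) (hsq : IsUnitSquare a b c x) :
    ZBFin2 d n F b x = ZBFin2 d n F a x ∧ ZBFin2 d n F x x = ZBFin2 d n F c x := by
  obtain ⟨p, hp, hpS⟩ := exists_isPath_through (n := n) (S := {a, x}) (by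
    rintro e (rfl | rfl) f (rfl | rfl) <;> simp [hsq.bot_le_top])
  have hpa := hpS a (by simp)
  have hpx := hpS x (by simp)
  rw [hsq.rank_top] at hpx
  have hk : gridRank a + 2 ≤ 2 * n := hsq.rank_top ▸ gridRank_le x
  obtain ⟨h1, h2⟩ := h.pairingNumber_eq hmono hnd hsq hp hpa hpx
    (show gridRank a + 1 < 2 * n by omega)
  have e (z) : Function.update p (gridRank a + 1) z (gridRank a + 1 + 1) = x := by
    rw [Function.update_of_ne (by omega), hpx]
  rw [e, e, Function.update_self, Function.update_self] at h1 h2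
  simp only [pairingNumber] at h1 h2
  have hb := hsq.ZBFin2_left_left (d := d) hmono hcx hnd
  have hxc := ZBFin2_eq_of_le (d := d) hmono hcx hsq.symm.left_ne_last hsq.right_le_top
  have hxb := ZBFin2_eq_of_le (d := d) hmono hcx hsq.left_ne_last hsq.left_le_top
  have hxa := ZBFin2_eq_of_le (d := d) hmono hcx hsq.bot_ne_last hsq.bot_le_top
  have hba := ZBFin2_eq_of_le (d := d) hmono hcx hsq.bot_ne_last hsq.bot_le_left
  constructor <;> linarith

theorem SamePairing.ZBFin2_row (h : SamePairing d n F a b c x) (hmono : Monotone F)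
    (hcx : ∀ x, IsComplex (F x)) (hnd : NonDeg F) (hsq : IsUnitSquare a b c x)
    {e : Fin (n+1) × Fin (n+1)} (he : x ≤ e) :
    ZBFin2 d n F x e - ZBFin2 d n F b e - ZBFin2 d n F c e + ZBFin2 d n F a e = 0 := by
  have hax := hsq.bot_le_top
  obtain ⟨p, hp, hpS⟩ := exists_isPath_through (n := n) (S := {a, x, e}) (by
    rintro e (rfl | rfl | rfl) f (rfl | rfl | rfl) <;> simp [hax, he, hax.trans he])
  have hpa := hpS a (by simp)
  have hpx := hpS x (by simp)
  have hpe := hpS e (by simp)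
  have hxe : gridRank x ≤ gridRank e := Nat.add_le_add he.1 he.2
  have key : ∀ k, gridRank x ≤ k → k ≤ 2 * n → ZBFin2 d n F x (p k) - ZBFin2 d n F b (p k) -
      ZBFin2 d n F c (p k) + ZBFin2 d n F a (p k) = 0 := by
    intro k hk
    induction k, hk using Nat.le_induction with
    | base =>
      intro _
      obtain ⟨h1, h2⟩ := h.ZBFin2_top hmono hcx hnd hsq
      rw [hpx]
      linarith
    | succ k hk ih =>
      intro hk'
      have h1 := (h.pairingNumber_eq hmono hnd hsq hp hpa (hsq.rank_top ▸ hpx)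
        (show k < 2 * n by omega)).1
      rw [hsq.rank_top] at hk
      simp only [Function.update_of_ne (show k ≠ gridRank a + 1 by omega),
        Function.update_of_ne (show k + 1 ≠ gridRank a + 1 by omega), pairingNumber] at h1
      linarith [ih (by omega)]
  simpa only [hpe] using key _ hxe (gridRank_le e)

theorem SamePairing.ZBFin2_column (h : SamePairing d n F a b c x) (hmono : Monotone F)
    (hbot : F (0, 0) = ∅) (hnd : NonDeg F) (hsq : IsUnitSquare a b c x)
    {w : Fin (n+1) × Fin (n+1)} (hw : w ≤ a) :
    ZBFin2 d n F w x - ZBFin2 d n F w b - ZBFin2 d n F w c + ZBFin2 d n F w a = 0 := by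
  have hax := hsq.bot_le_top
  obtain ⟨p, hp, hpS⟩ := exists_isPath_through (n := n) (S := {w, a, x}) (by
    rintro e (rfl | rfl | rfl) f (rfl | rfl | rfl) <;> simp [hax, hw, hw.trans hax])
  have hpw := hpS w (by simp)
  have hpa := hpS a (by simp)
  have hpx := hpS x (by simp)
  have hwa : gridRank w ≤ gridRank a := Nat.add_le_add hw.1 hw.2
  have hk : gridRank a + 2 ≤ 2 * n := hsq.rank_top ▸ gridRank_le x
  have key : ∀ k ≤ gridRank a, ZBFin2 d n F (p k) x - ZBFin2 d n F (p k) b -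
      ZBFin2 d n F (p k) c + ZBFin2 d n F (p k) a = 0 := by
    intro k
    induction k with
    | zero =>
      intro _
      simp only [hp.1, ZBFin2_bot hbot]
      rfl
    | succ k ih =>
      intro hk'
      have h1 := (h.pairingNumber_eq hmono hnd hsq hp hpa (hsq.rank_top ▸ hpx)
        (show k < 2 * n by omega)).2
      simp only [Function.update_of_ne (show k ≠ gridRank a + 1 by omega),
        Function.update_of_ne (show k + 1 ≠ gridRank a + 1 by omega), pairingNumber] at h1
      linarith [ih (by omega)]
  simpa only [hpw] using key _ hwa

/-- The column identity for a grade `v` that is joined to `u ≤ a` by a step parallel to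
`a → b`. -/
theorem SamePairing.ZBFin2_column_step (h : SamePairing d n F a b c x) (hmono : Monotone F)
    (hcx : ∀ x, IsComplex (F x)) (hbot : F (0, 0) = ∅) (hnd : NonDeg F)
    (hsq : IsUnitSquare a b c x) {u v : Fin (n+1) × Fin (n+1)} (hu : u ≤ a) (huv : u ≤ v)
    (hvb : v ≤ b) (hF : F v ∩ F a ⊆ F u) :
    ZBFin2 d n F v x - ZBFin2 d n F v b - ZBFin2 d n F u c + ZBFin2 d n F u a = 0 := by
  have h1 := h.ZBFin2_column hmono hbot hnd hsq hu
  have h2 := ZBFin2_eq_of_inter_subset hmono hsq.bot_le_left huv hvb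
    (h.ZBFin2_top hmono hcx hnd hsq).1 hF
  have h3 := ZBFin2_eq_of_inter_subset hmono hsq.bot_le_left huv hvb
    (hsq.ZBFin2_left_left (d := d) hmono hcx hnd) hF
  linarith

end Square

section Inversion

variable {n : ℕ} (g : Fin (n+1) × Fin (n+1) → Fin (n+1) × Fin (n+1) → ℤ)

/-- The sum of `g` over the intervals `[a, b]` with `a ≤ c` and `b ≤ e`. -/
def intervalSum (c e : Fin (n+1) × Fin (n+1)) : ℤ :=
  ∑ a, ∑ b, if a ≤ b ∧ a ≤ c ∧ b ≤ e then g a b else 0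

theorem intervalSum_inf (c e : Fin (n+1) × Fin (n+1)) :
    intervalSum g (c ⊓ e) e = intervalSum g c e := by
  refine Finset.sum_congr rfl fun a _ => Finset.sum_congr rfl fun b _ => if_congr ?_ rfl rfl
  exact ⟨fun h => ⟨h.1, h.2.1.trans inf_le_left, h.2.2⟩,
    fun h => ⟨h.1, le_inf h.2.1 (h.1.trans h.2.2), h.2.2⟩⟩

variable {a b c x : Fin (n+1) × Fin (n+1)}

theorem ite_le_alternating_sum (hx1 : (a.1 : ℕ) + 1 = x.1) (hx2 : (a.2 : ℕ) + 1 = x.2)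
    (y : Fin (n+1) × Fin (n+1)) :
    ((if y ≤ x then 1 else 0) - (if y ≤ (x.1, a.2) then 1 else 0) -
      (if y ≤ (a.1, x.2) then 1 else 0) + (if y ≤ a then 1 else 0) : ℤ) =
      if y = x then 1 else 0 := by
  simp only [grid_le_iff, grid_ext_iff]
  split_ifs <;> omega

theorem intervalSum_row (hx1 : (a.1 : ℕ) + 1 = x.1) (hx2 : (a.2 : ℕ) + 1 = x.2)
    (e : Fin (n+1) × Fin (n+1)) :
    intervalSum g x e - intervalSum g (x.1, a.2) e - intervalSum g (a.1, x.2) e +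
      intervalSum g a e = ∑ y, if x ≤ y ∧ y ≤ e then g x y else 0 := by
  have h (z) : intervalSum g z e =
      ∑ w, (if w ≤ z then 1 else 0) * ∑ y, if w ≤ y ∧ y ≤ e then g w y else 0 := by
    refine Finset.sum_congr rfl fun w _ => ?_
    rw [Finset.mul_sum]
    refine Finset.sum_congr rfl fun y _ => ?_
    by_cases hw : w ≤ z <;> simp [hw]
  simp only [h, ← Finset.sum_sub_distrib, ← Finset.sum_add_distrib, ← sub_mul, ← add_mul,
    ite_le_alternating_sum hx1 hx2]
  simp

theorem intervalSum_column (hx1 : (a.1 : ℕ) + 1 = x.1) (hx2 : (a.2 : ℕ) + 1 = x.2)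
    (w : Fin (n+1) × Fin (n+1)) :
    intervalSum g w x - intervalSum g w (x.1, a.2) - intervalSum g w (a.1, x.2) +
      intervalSum g w a = ∑ y, if y ≤ x ∧ y ≤ w then g y x else 0 := by
  have h (z) : intervalSum g w z =
      ∑ u, ∑ y, (if y ≤ z then 1 else 0) * if u ≤ y ∧ u ≤ w then g u y else 0 := by
    refine Finset.sum_congr rfl fun u _ => Finset.sum_congr rfl fun y _ => ?_
    by_cases hy : y ≤ z <;> simp [hy]
  simp only [h, ← Finset.sum_sub_distrib, ← Finset.sum_add_distrib, ← sub_mul, ← add_mul,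
    ite_le_alternating_sum hx1 hx2]
  simp only [ite_mul, one_mul, zero_mul, Finset.sum_ite_eq', Finset.mem_univ, if_true]

theorem eq_zero_of_sum_le_eq_zero {α : Type*} [PartialOrder α] [Fintype α] {P : α → Prop}
    [∀ z y, Decidable (P z ∧ z ≤ y)] {f : α → ℤ} (h : ∀ y, P y → ∑ z, (if P z ∧ z ≤ y then f z else 0) = 0) :
    ∀ y, P y → f y = 0 := by
  intro y
  induction y using WellFoundedLT.induction with
  | ind y ih =>
    intro hy
    have h1 := h y hy
    rwa [Finset.sum_eq_single y, if_pos ⟨hy, le_rfl⟩] at h1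
    · intro z _ hz
      split_ifs with hc
      · exact ih z (lt_of_le_of_ne hc.2 hz) hc.1
      · rfl
    · exact fun h => absurd (Finset.mem_univ _) h

end Inversion

section Vanishing

variable {d n : ℕ} {F : Fin (n+1) × Fin (n+1) → Finset (Finset V)}
  {a x : Fin (n+1) × Fin (n+1)}

theorem isUnitSquare_of_coords (hx1 : (a.1 : ℕ) + 1 = x.1) (hx2 : (a.2 : ℕ) + 1 = x.2) :
    IsUnitSquare a (x.1, a.2) (a.1, x.2) x := by
  constructor <;> simp only [grid_le_iff, gridRank] <;> omega

theorem ZBFin2_column_of_lt (hmono : Monotone F) (hcx : ∀ x, IsComplex (F x))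
    (hbot : F (0, 0) = ∅) (hnd : NonDeg F) (hx1 : (a.1 : ℕ) + 1 = x.1)
    (hx2 : (a.2 : ℕ) + 1 = x.2) {σ τ : Finset V} (hσ : σ ∉ F a) (hτ : τ ∉ F a)
    (hσb : σ ∈ F (x.1, a.2)) (hτc : τ ∈ F (a.1, x.2))
    (hbc : SamePairing d n F a (x.1, a.2) (a.1, x.2) x)
    (hcb : SamePairing d n F a (a.1, x.2) (x.1, a.2) x) {w : Fin (n+1) × Fin (n+1)}
    (hw : w < x) :
    ZBFin2 d n F (w ⊓ x) x - ZBFin2 d n F (w ⊓ (x.1, a.2)) (x.1, a.2) -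
      ZBFin2 d n F (w ⊓ (a.1, x.2)) (a.1, x.2) + ZBFin2 d n F (w ⊓ a) a = 0 := by
  have hsq := isUnitSquare_of_coords hx1 hx2
  have hinf : ((x.1, a.2) : Fin (n+1) × Fin (n+1)) ⊓ (a.1, x.2) = a :=
    Prod.ext (inf_eq_right.2 (show (a.1 : ℕ) ≤ x.1 by omega))
      (inf_eq_left.2 (show (a.2 : ℕ) ≤ x.2 by omega))
  have hcase : w ≤ (x.1, a.2) ∨ w ≤ (a.1, x.2) := by
    have h1 := hw.le
    have h2 := hw.ne
    simp only [grid_le_iff, Ne, grid_ext_iff] at h1 h2 ⊢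
    omega
  rw [inf_eq_left.2 hw.le]
  rcases hcase with h | h
  · have hF : F w ∩ F a ⊆ F (w ⊓ a) := fun s hs => by
      obtain ⟨hsw, hsa⟩ := Finset.mem_inter.1 hs
      by_contra hsu
      have h2 : ((w ⊓ a).2 : ℕ) = w.2 := by
        rw [show (w ⊓ a).2 = w.2 from inf_eq_left.2 h.2]
      have hwa : ¬ w ≤ a := fun hwa => hsu (by rwa [inf_eq_left.2 hwa])
      have h1 : (w.1 : ℕ) = x.1 := by
        simp only [grid_le_iff] at h hwa
        omega
      have h1' : ((w ⊓ a).1 : ℕ) = a.1 := by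
        rw [show (w ⊓ a).1 = a.1 from inf_eq_right.2 (show (a.1 : ℕ) ≤ w.1 by omega)]
      exact hσ (hnd.eq_of_horizontal (v' := (x.1, a.2)) hmono (by omega) h2 hx1 rfl h1 hsw hsu hσb hσ ▸ hsa)
    have := hbc.ZBFin2_column_step hmono hcx hbot hnd hsq inf_le_right inf_le_left h hF
    have hwc : w ⊓ (a.1, x.2) = w ⊓ a := by
      conv_rhs => rw [← hinf, ← inf_assoc, inf_eq_left.2 h]
    rwa [inf_eq_left.2 h, hwc]
  · have hF : F w ∩ F a ⊆ F (w ⊓ a) := fun s hs => by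
      obtain ⟨hsw, hsa⟩ := Finset.mem_inter.1 hs
      by_contra hsu
      have h1 : ((w ⊓ a).1 : ℕ) = w.1 := by
        rw [show (w ⊓ a).1 = w.1 from inf_eq_left.2 h.1]
      have hwa : ¬ w ≤ a := fun hwa => hsu (by rwa [inf_eq_left.2 hwa])
      have h2 : (w.2 : ℕ) = x.2 := by
        simp only [grid_le_iff] at h hwa
        omega
      have h2' : ((w ⊓ a).2 : ℕ) = a.2 := by
        rw [show (w ⊓ a).2 = a.2 from inf_eq_right.2 (show (a.2 : ℕ) ≤ w.2 by omega)]
      exact hτ (hnd.eq_of_vertical (v' := (a.1, x.2)) hmono (by omega) h1 hx2 rfl h2 hsw hsu hτc hτ ▸ hsa)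
    have := hcb.ZBFin2_column_step hmono hcx hbot hnd hsq.symm inf_le_right inf_le_left h hF
    have hwb : w ⊓ (x.1, a.2) = w ⊓ a := by
      conv_rhs => rw [← hinf, inf_comm (x.1, a.2), ← inf_assoc, inf_eq_left.2 h]
    rw [inf_eq_left.2 h, hwb]
    linarith

theorem diagram_vanishes_of_samePairing (hmono : Monotone F) (hcx : ∀ x, IsComplex (F x))
    (hbot : F (0, 0) = ∅) (hnd : NonDeg F) (hx1 : (a.1 : ℕ) + 1 = x.1)
    (hx2 : (a.2 : ℕ) + 1 = x.2) {σ τ : Finset V} (hσ : σ ∉ F a) (hτ : τ ∉ F a)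
    (hσb : σ ∈ F (x.1, a.2)) (hτc : τ ∈ F (a.1, x.2))
    (hbc : SamePairing d n F a (x.1, a.2) (a.1, x.2) x)
    (hcb : SamePairing d n F a (a.1, x.2) (x.1, a.2) x)
    {g : Fin (n+1) × Fin (n+1) → Fin (n+1) × Fin (n+1) → ℤ}
    (hg : ∀ c e : Fin (n+1) × Fin (n+1), c ≤ e → ZBFin2 d n F c e = intervalSum g c e) :
    (∀ y, x ≤ y → g x y = 0) ∧ (∀ w, w ≤ x → g w x = 0) := by
  have hsq := isUnitSquare_of_coords hx1 hx2
  have hrow : ∀ y, x ≤ y → g x y = 0 := eq_zero_of_sum_le_eq_zero fun e he => by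
    rw [← intervalSum_row g hx1 hx2 e, ← hg _ _ he, ← hg _ _ (hsq.left_le_top.trans he),
      ← hg _ _ (hsq.right_le_top.trans he), ← hg _ _ (hsq.bot_le_top.trans he)]
    exact hbc.ZBFin2_row hmono hcx hnd hsq he
  have hcol : ∀ w, w < x → g w x = 0 := eq_zero_of_sum_le_eq_zero (f := (g · x)) fun w hw => by
    have h (z) : intervalSum g w z = ZBFin2 d n F (w ⊓ z) z := by
      rw [hg _ _ inf_le_right, intervalSum_inf]
    have := intervalSum_column g hx1 hx2 w
    rw [h, h, h, h, ZBFin2_column_of_lt hmono hcx hbot hnd hx1 hx2 hσ hτ hσb hτc hbc hcb hw] at this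
    refine (Finset.sum_congr rfl fun z _ => if_congr ?_ rfl rfl).trans this.symm
    exact ⟨fun hz => ⟨hz.1.le, hz.2⟩, fun hz => ⟨hz.2.trans_lt hw, hz.2⟩⟩
  refine ⟨hrow, fun w hw => ?_⟩
  rcases hw.eq_or_lt with rfl | hw
  · exact hrow _ le_rfl
  · exact hcol w hw

/-- The simplex `ρ` enters a path through `b` at the step `a → b` and a path through `c` at the
step `c → x`, so equality of its pairings is an instance of `SamePairing`. -/
theorem samePairing_of_stepOf {b c : Fin (n+1) × Fin (n+1)} (hsq : IsUnitSquare a b c x)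
    {ρ : Finset V} (hb : ρ ∈ F b) (hc : ρ ∉ F c)
    (h : ∀ (p₁ p₂ : ℕ → Fin (n+1) × Fin (n+1)) (k : ℕ),
      IsPath n p₁ → IsPath n p₂ → k + 2 ≤ 2*n →
      p₁ k = a → p₁ (k+2) = x → p₂ k = a → p₂ (k+2) = x →
      (∀ m : ℕ, m ≠ k+1 → p₁ m = p₂ m) →
      ∀ m : ℕ,
        (PairedAt d (2*n) (F ∘ p₁) (stepOf F p₁ ρ k) m ↔
          PairedAt d (2*n) (F ∘ p₂) (stepOf F p₂ ρ k) m) ∧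
        (PairedAt d (2*n) (F ∘ p₁) m (stepOf F p₁ ρ k) ↔
          PairedAt d (2*n) (F ∘ p₂) m (stepOf F p₂ ρ k))) :
    SamePairing d n F a b c x := by
  intro p k hp hk hpa hpx m
  have hr : gridRank a = k := by rw [← hpa, hp.gridRank_apply (by omega)]
  have e (z) : Function.update p (k + 1) z k = a := by
    rw [Function.update_of_ne (by omega), hpa]
  have e' (z) : Function.update p (k + 1) z (k + 2) = x := by
    rw [Function.update_of_ne (by omega), hpx]
  have := h (Function.update p (k + 1) b) (Function.update p (k + 1) c) k
    (hp.update hk (hpa.le.trans hsq.bot_le_left) (hsq.left_le_top.trans hpx.ge)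
      (hr ▸ hsq.rank_left))
    (hp.update hk (hpa.le.trans hsq.bot_le_right) (hsq.right_le_top.trans hpx.ge)
      (hr ▸ hsq.rank_right)) hk (e b) (e' b) (e c) (e' c)
    (fun m hm => by rw [Function.update_of_ne hm, Function.update_of_ne hm]) m
  rwa [stepOf, stepOf, Function.update_self, Function.update_self, if_pos hb, if_neg hc] at this

end Vanishing

/-- Pairing-switch vanishing: if two distinct simplices `σ, τ` appear together in the unit
square between `x − (1,1)` and `x` of a non-degenerate 2-filtration, and for every pair
of paths through the square (differing only in the intermediate step) the pairings of
`σ` and of `τ` are the same (no switch), then the generalized persistence diagram `g`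
(the Möbius inversion of the birth–death function) vanishes on every interval having
`x` as an endpoint. -/
theorem pairing_switch_vanishing (d n : ℕ)
    (F : Fin (n+1) × Fin (n+1) → Finset (Finset V))
    (hmono : Monotone F) (hcx : ∀ x, IsComplex (F x)) (hbot : F (0, 0) = ∅)
    (hnd : NonDeg F)
    (σ τ : Finset V) (hστ : σ ≠ τ)
    (x xm : Fin (n+1) × Fin (n+1))
    (hx1 : (xm.1 : ℕ) + 1 = (x.1 : ℕ)) (hx2 : (xm.2 : ℕ) + 1 = (x.2 : ℕ))
    (hadd : F x = insert σ (insert τ (F xm))) (hσ : σ ∉ F xm) (hτ : τ ∉ F xm)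
    (hnoswitch : ∀ (p₁ p₂ : ℕ → Fin (n+1) × Fin (n+1)) (k : ℕ),
      IsPath n p₁ → IsPath n p₂ → k + 2 ≤ 2*n →
      p₁ k = xm → p₁ (k+2) = x → p₂ k = xm → p₂ (k+2) = x →
      (∀ m : ℕ, m ≠ k+1 → p₁ m = p₂ m) →
      ∀ m : ℕ,
        (PairedAt d (2*n) (F ∘ p₁) (stepOf F p₁ σ k) m ↔
          PairedAt d (2*n) (F ∘ p₂) (stepOf F p₂ σ k) m) ∧
        (PairedAt d (2*n) (F ∘ p₁) m (stepOf F p₁ σ k) ↔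
          PairedAt d (2*n) (F ∘ p₂) m (stepOf F p₂ σ k)) ∧
        (PairedAt d (2*n) (F ∘ p₁) (stepOf F p₁ τ k) m ↔
          PairedAt d (2*n) (F ∘ p₂) (stepOf F p₂ τ k) m) ∧
        (PairedAt d (2*n) (F ∘ p₁) m (stepOf F p₁ τ k) ↔
          PairedAt d (2*n) (F ∘ p₂) m (stepOf F p₂ τ k)))
    (g : Fin (n+1) × Fin (n+1) → Fin (n+1) × Fin (n+1) → ℤ)
    (hg : ∀ c e : Fin (n+1) × Fin (n+1), c ≤ e →
      ZBFin2 d n F c e =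
        ∑ a : Fin (n+1) × Fin (n+1), ∑ b : Fin (n+1) × Fin (n+1),
          if a ≤ b ∧ a ≤ c ∧ b ≤ e then g a b else 0) :
    (∀ y : Fin (n+1) × Fin (n+1), x ≤ y → g x y = 0) ∧
    (∀ w : Fin (n+1) × Fin (n+1), w ≤ x → g w x = 0) := by
  have hsq := isUnitSquare_of_coords hx1 hx2
  have hσx : σ ∈ F x := by simp [hadd]
  have hτx : τ ∈ F x := by simp [hadd]
  have hb : ¬ (σ ∈ F (x.1, xm.2) ∧ τ ∈ F (x.1, xm.2)) := fun h =>
    hστ (hnd.eq_of_horizontal (v := (x.1, xm.2)) (v' := (x.1, xm.2)) hmono hx1 rfl hx1 rfl rfl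
      h.1 hσ h.2 hτ)
  have hc : ¬ (σ ∈ F (xm.1, x.2) ∧ τ ∈ F (xm.1, x.2)) := fun h =>
    hστ (hnd.eq_of_vertical (v := (xm.1, x.2)) (v' := (xm.1, x.2)) hmono hx2 rfl hx2 rfl rfl
      h.1 hσ h.2 hτ)
  have hb' : σ ∈ F (x.1, xm.2) ∨ τ ∈ F (x.1, xm.2) := by
    by_contra! h
    exact hστ (hnd.eq_of_vertical (u := (x.1, xm.2)) (u' := (x.1, xm.2)) hmono hx2 rfl hx2 rfl rfl
      hσx h.1 hτx h.2)
  rcases hb' with hσb | hτb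
  · have hτc : τ ∈ F (xm.1, x.2) := by
      by_contra h
      exact hστ (hnd.eq_of_horizontal (v := (x.1, xm.2)) (u' := (xm.1, x.2)) hmono hx1 rfl hx1 rfl rfl
        hσb hσ hτx h)
    refine diagram_vanishes_of_samePairing hmono hcx hbot hnd hx1 hx2 hσ hτ hσb hτc
      (samePairing_of_stepOf hsq hσb (fun h => hc ⟨h, hτc⟩) ?_)
      (samePairing_of_stepOf hsq.symm hτc (fun h => hb ⟨hσb, h⟩) ?_) hg
    · intro p₁ p₂ k h₁ h₂ hk h₃ h₄ h₅ h₆ h₇ m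
      obtain ⟨h, h', -⟩ := hnoswitch p₁ p₂ k h₁ h₂ hk h₃ h₄ h₅ h₆ h₇ m
      exact ⟨h, h'⟩
    · intro p₁ p₂ k h₁ h₂ hk h₃ h₄ h₅ h₆ h₇ m
      exact (hnoswitch p₁ p₂ k h₁ h₂ hk h₃ h₄ h₅ h₆ h₇ m).2.2
  · have hσc : σ ∈ F (xm.1, x.2) := by
      by_contra h
      exact hστ (hnd.eq_of_horizontal (u := (xm.1, x.2)) (v' := (x.1, xm.2)) hmono hx1 rfl hx1 rfl rfl
        hσx h hτb hτ)
    refine diagram_vanishes_of_samePairing hmono hcx hbot hnd hx1 hx2 hτ hσ hτb hσc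
      (samePairing_of_stepOf hsq hτb (fun h => hc ⟨hσc, h⟩) ?_)
      (samePairing_of_stepOf hsq.symm hσc (fun h => hb ⟨h, hτb⟩) ?_) hg
    · intro p₁ p₂ k h₁ h₂ hk h₃ h₄ h₅ h₆ h₇ m
      exact (hnoswitch p₁ p₂ k h₁ h₂ hk h₃ h₄ h₅ h₆ h₇ m).2.2
    · intro p₁ p₂ k h₁ h₂ hk h₃ h₄ h₅ h₆ h₇ m
      obtain ⟨h, h', -⟩ := hnoswitch p₁ p₂ k h₁ h₂ hk h₃ h₄ h₅ h₆ h₇ m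
      exact ⟨h, h'⟩
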